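/- If there exists k₀ ≥ 1 such that the reflected shifted sequence (1−η_{k₀+1}, 1−η_{k₀+2}, 1−η_{k₀+3}, …) is lexicographically greater than (η_1, η_2, η_3, …), then the quasi-greedy orbit of 1 hits the interior of the switch region, i.e. there exists n ≥ 1 with Q^n(1) ∈ (1/β, 1/(β(β−1))). -/

import Mathlib

/-- The value `Σ_{n≥1} a_n β^{-n}` of a digit sequence (indexed from 0, so `a i = a_{i+1}`). -/
noncomputable def betaVal (β : ℝ) (a : ℕ → ℕ) : ℝ := ∑' n : ℕ, (a n : ℝ) / β ^ (n + 1)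

/-- `Ũ_β`: the set of 0-1 sequences that are the unique β-expansion of their value. -/
def UTilde (β : ℝ) : Set (ℕ → ℕ) :=
  {a | (∀ n, a n ≤ 1) ∧
    ∀ b : ℕ → ℕ, (∀ n, b n ≤ 1) → betaVal β b = betaVal β a → b = a}

/-- The word `w` occurs in the sequence `x` starting at position `n`. -/
def OccursAt (w : List ℕ) (x : ℕ → ℕ) (n : ℕ) : Prop :=
  ∀ i : Fin w.length, x (n + i.1) = w.get i

/-- `Y` is a subshift of finite type inside the ambient full shift `{0,1}^ℕ`: there is a
finite set `F` of forbidden words such that `Y` consists exactly of the 0-1 sequences in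
which no word of `F` occurs. -/
def IsSFT01 (Y : Set (ℕ → ℕ)) : Prop :=
  ∃ F : Set (List ℕ), F.Finite ∧
    Y = {x | (∀ n, x n ≤ 1) ∧ ∀ w ∈ F, ∀ n, ¬ OccursAt w x n}

/-- Strict lexicographic order on sequences. -/
def LexLt (a b : ℕ → ℕ) : Prop :=
  ∃ n, (∀ k < n, a k = b k) ∧ a n < b n

/-- `η` is the quasi-greedy expansion of `1` in base `β`: the lexicographically largest
0-1 sequence with infinitely many digits `1` whose value is `1`. -/
def QuasiGreedy (β : ℝ) (η : ℕ → ℕ) : Prop :=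
  (∀ n, η n ≤ 1) ∧ (∀ N, ∃ n ≥ N, η n = 1) ∧ betaVal β η = 1 ∧
    ∀ ζ : ℕ → ℕ, (∀ n, ζ n ≤ 1) → (∀ N, ∃ n ≥ N, ζ n = 1) →
      betaVal β ζ = 1 → ζ ≠ η → LexLt ζ η

/-!
Write `Qₙ` for the orbit point `Q^n(1)`, so that `Qₙ₊₁ = β Qₙ - ηₙ` with digits indexed from `0`.
Maximality of `η` forces `Qₙ ≤ 1/β` at every digit `0`, as otherwise one could replace the tail by
an expansion starting with `1`; at a digit `1`, `Qₙ > 1/β` because the next orbit point is positive.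

The value of the tail reflected from index `k` on is `1/(β-1) - Qₖ`. At the first index where it
differs from `η`, both `η` and its shift have a digit `0`, so both orbit points there are at most
`1/β`; as `2/β < 1/(β-1)`, the reflected tail has the larger value, i.e. `Qₖ < 1/(β-1) - 1`.

Now run the orbit backwards from such a `k`. Across a digit `0` the bound persists, and across a
digit `1` it says `Qₖ₋₁ < 1/(β(β-1))`, a hit. If index `1` is reached, then `Q₁ = β - 1` gives
`β(β-1) < 1`, so the switch region contains `(1/β, 1]` and every later digit `1` is a hit.
-/

section Orbits

theorem orbit_sub_orbit {R : Type*} [CommRing R] {β : R} {x y d : ℕ → R} {n : ℕ}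
    (hx : ∀ k < n, x (k + 1) = β * x k - d k) (hy : ∀ k < n, y (k + 1) = β * y k - d k) :
    x n - y n = β ^ n * (x 0 - y 0) := by
  induction n with
  | zero => simp
  | succ n ih =>
    have ih := ih (fun k hk => hx k (hk.trans n.lt_succ_self))
      (fun k hk => hy k (hk.trans n.lt_succ_self))
    rw [hx n n.lt_succ_self, hy n n.lt_succ_self]
    linear_combination β * ih

theorem orbit_eq_orbit_of_bounded {β C : ℝ} (hβ : 1 < β) {x y d : ℕ → ℝ}
    (hx : ∀ n, x (n + 1) = β * x n - d n) (hy : ∀ n, y (n + 1) = β * y n - d n)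
    (hC : ∀ n, |x n - y n| ≤ C) : x = y := by
  have growth (n : ℕ) : x n - y n = β ^ n * (x 0 - y 0) :=
    orbit_sub_orbit (fun k _ => hx k) (fun k _ => hy k)
  suffices start_eq : x 0 - y 0 = 0 by
    funext n
    rw [← sub_eq_zero, growth, start_eq, mul_zero]
  by_contra start_ne
  have start_pos : 0 < |x 0 - y 0| := abs_pos.mpr start_ne
  obtain ⟨n, hn⟩ := pow_unbounded_of_one_lt (C / |x 0 - y 0|) hβ
  refine (hC n).not_gt ?_
  rwa [growth, abs_mul, abs_of_pos (pow_pos (zero_lt_one.trans hβ) n), ← div_lt_iff₀ start_pos]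

end Orbits

section Values

variable {β : ℝ} {a b : ℕ → ℕ} {M : ℕ}

theorem hasSum_const_div_pow_succ (hβ : 1 < β) (c : ℝ) :
    HasSum (fun n : ℕ => c / β ^ (n + 1)) (c / (β - 1)) := by
  have hβ₀ : 0 < β := zero_lt_one.trans hβ
  have geometric := (hasSum_geometric_of_lt_one (inv_nonneg.mpr hβ₀.le)
    (inv_lt_one_of_one_lt₀ hβ)).mul_left (c / β)
  have terms_eq (n : ℕ) : c / β * β⁻¹ ^ n = c / β ^ (n + 1) := by
    rw [inv_pow, pow_succ', ← div_eq_mul_inv, div_div]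
  have sum_eq : c / β * (1 - β⁻¹)⁻¹ = c / (β - 1) := by
    rw [← div_eq_mul_inv, div_div, mul_sub, mul_one, mul_inv_cancel₀ hβ₀.ne']
  simpa only [terms_eq, sum_eq] using geometric

theorem digit_div_pow_le (hβ : 0 ≤ β) (ha : ∀ n, a n ≤ M) (n : ℕ) :
    (a n : ℝ) / β ^ (n + 1) ≤ M / β ^ (n + 1) := by
  have := ha n
  gcongr

theorem summable_digit_div_pow (hβ : 1 < β) (ha : ∀ n, a n ≤ M) :
    Summable fun n => (a n : ℝ) / β ^ (n + 1) :=
  .of_nonneg_of_le (fun _ => by positivity) (digit_div_pow_le (zero_lt_one.trans hβ).le ha)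
    (hasSum_const_div_pow_succ hβ M).summable

theorem betaVal_nonneg (hβ : 0 ≤ β) : 0 ≤ betaVal β a :=
  tsum_nonneg fun _ => by positivity

theorem betaVal_le (hβ : 1 < β) (ha : ∀ n, a n ≤ M) : betaVal β a ≤ M / (β - 1) :=
  hasSum_le (digit_div_pow_le (zero_lt_one.trans hβ).le ha) (summable_digit_div_pow hβ ha).hasSum
    (hasSum_const_div_pow_succ hβ M)

theorem betaVal_pos_iff (hβ : 1 < β) (ha : ∀ n, a n ≤ M) : 0 < betaVal β a ↔ ∃ n, a n ≠ 0 := by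
  constructor
  · contrapose!
    intro h
    simp [betaVal, h]
  · rintro ⟨n, hn⟩
    have : 0 < a n := Nat.pos_of_ne_zero hn
    exact (summable_digit_div_pow hβ ha).tsum_pos (fun _ => by positivity) n (by positivity)

theorem betaVal_shift (hβ : 1 < β) (ha : ∀ n, a n ≤ M) :
    betaVal β (fun k => a (k + 1)) = β * betaVal β a - a 0 := by
  have hβ₀ : β ≠ 0 := (zero_lt_one.trans hβ).ne'
  have rescale (n : ℕ) :
      β * ((a (n + 1) : ℝ) / β ^ (n + 1 + 1)) = (a (n + 1) : ℝ) / β ^ (n + 1) := by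
    rw [pow_succ' β (n + 1), mul_div_assoc', mul_div_mul_left _ _ hβ₀]
  simp only [betaVal]
  rw [(summable_digit_div_pow hβ ha).tsum_eq_zero_add, mul_add, ← tsum_mul_left]
  simp only [rescale, zero_add, pow_one, mul_div_cancel₀ _ hβ₀, add_sub_cancel_left]

/-- The value of the tail of the digit sequence `a` from index `n` on. If `a` is the quasi-greedy
expansion of `1`, this is the orbit point `Q^n(1)`. -/
noncomputable def tailVal (β : ℝ) (a : ℕ → ℕ) (n : ℕ) : ℝ := betaVal β fun k => a (n + k)

theorem tailVal_zero : tailVal β a 0 = betaVal β a := by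
  simp only [tailVal, zero_add]

theorem tailVal_succ (hβ : 1 < β) (ha : ∀ n, a n ≤ M) (n : ℕ) :
    tailVal β a (n + 1) = β * tailVal β a n - a n := by
  simpa only [tailVal, add_zero, add_right_comm n 1, ← add_assoc] using
    betaVal_shift hβ fun k => ha (n + k)

theorem tailVal_nonneg (hβ : 0 ≤ β) (n : ℕ) : 0 ≤ tailVal β a n :=
  betaVal_nonneg hβ

theorem tailVal_le (hβ : 1 < β) (ha : ∀ n, a n ≤ M) (n : ℕ) : tailVal β a n ≤ M / (β - 1) :=
  betaVal_le hβ fun k => ha (n + k)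

theorem tailVal_pos_iff (hβ : 1 < β) (ha : ∀ n, a n ≤ M) (n : ℕ) :
    0 < tailVal β a n ↔ ∃ m ≥ n, a m ≠ 0 := by
  rw [tailVal, betaVal_pos_iff hβ fun k => ha (n + k)]
  simp only [ge_iff_le, le_iff_exists_add]
  aesop

theorem tailVal_sub_tailVal_of_agree (hβ : 1 < β) (ha : ∀ n, a n ≤ M) (hb : ∀ n, b n ≤ M) {n : ℕ}
    (agree : ∀ k < n, a k = b k) :
    tailVal β a n - tailVal β b n = β ^ n * (betaVal β a - betaVal β b) := by
  simp only [← tailVal_zero]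
  exact orbit_sub_orbit (fun k _ => tailVal_succ hβ ha k)
    (fun k hk => agree k hk ▸ tailVal_succ hβ hb k)

theorem tailVal_eq_of_bounded_orbit (hβ : 1 < β) (ha : ∀ n, a n ≤ M) {r : ℕ → ℝ} {C : ℝ}
    (hr : ∀ n, r (n + 1) = β * r n - a n) (hC : ∀ n, r n ∈ Set.Icc 0 C) : tailVal β a = r := by
  refine orbit_eq_orbit_of_bounded (C := max (M / (β - 1)) C) hβ (tailVal_succ hβ ha) hr fun n => ?_
  exact abs_sub_le_of_nonneg_of_le (tailVal_nonneg (zero_lt_one.trans hβ).le n)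
    ((tailVal_le hβ ha n).trans (le_max_left _ _)) (hC n).1 ((hC n).2.trans (le_max_right _ _))

theorem tailVal_reflect (hβ : 1 < β) (ha : ∀ n, a n ≤ 1) :
    tailVal β (fun k => 1 - a k) = fun n => 1 / (β - 1) - tailVal β a n := by
  have hβ₁ : β - 1 ≠ 0 := (sub_pos.mpr hβ).ne'
  refine tailVal_eq_of_bounded_orbit (C := 1 / (β - 1)) hβ (fun _ => Nat.sub_le _ _)
    (fun n => ?_) fun n => ⟨?_, ?_⟩
  · rw [tailVal_succ hβ ha, Nat.cast_sub (ha n)]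
    field_simp
    push_cast
    ring
  · simpa using tailVal_le hβ ha n
  · exact sub_le_self _ (tailVal_nonneg (zero_lt_one.trans hβ).le n)

/-- The digit sequence that follows `a` up to index `n - 1` and continues with `d`. -/
def splice (a d : ℕ → ℕ) (n i : ℕ) : ℕ := if i < n then a i else d (i - n)

theorem splice_of_lt (a d : ℕ → ℕ) {n i : ℕ} (h : i < n) : splice a d n i = a i :=
  if_pos h

theorem splice_add (a d : ℕ → ℕ) (n k : ℕ) : splice a d n (n + k) = d k := by
  simp [splice]

theorem splice_le {d : ℕ → ℕ} (ha : ∀ n, a n ≤ M) (hd : ∀ n, d n ≤ M) (n i : ℕ) :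
    splice a d n i ≤ M := by
  unfold splice
  split_ifs
  exacts [ha i, hd (i - n)]

theorem betaVal_splice (hβ : 1 < β) {d : ℕ → ℕ} (ha : ∀ n, a n ≤ M) (hd : ∀ n, d n ≤ M) {n : ℕ}
    (hval : betaVal β d = tailVal β a n) : betaVal β (splice a d n) = betaVal β a := by
  have tail_eq : tailVal β (splice a d n) n = tailVal β a n := by
    simpa only [tailVal, splice_add] using hval
  have difference := tailVal_sub_tailVal_of_agree hβ (splice_le ha hd n) ha
    (fun _ hk => splice_of_lt a d hk)
  rw [tail_eq, sub_self, eq_comm, mul_eq_zero_iff_left (pow_pos (zero_lt_one.trans hβ) n).ne']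
    at difference
  exact sub_eq_zero.mp difference

end Values

section QuasiGreedyAlgorithm

variable {β x : ℝ}

/-- The digit chosen by the quasi-greedy algorithm at the point `x`; the strict inequality is what
keeps the remainder positive. -/
noncomputable def quasiGreedyDigit (β x : ℝ) : ℕ := if 1 < β * x then 1 else 0

/-- The map sending a point to its remainder after one step of the quasi-greedy algorithm. -/
noncomputable def quasiGreedyMap (β x : ℝ) : ℝ := β * x - quasiGreedyDigit β x

/-- The digit sequence produced by the quasi-greedy algorithm started at `x`. -/
noncomputable def quasiGreedyExpansion (β x : ℝ) (n : ℕ) : ℕ :=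
  quasiGreedyDigit β ((quasiGreedyMap β)^[n] x)

theorem quasiGreedyExpansion_le_one (n : ℕ) : quasiGreedyExpansion β x n ≤ 1 := by
  unfold quasiGreedyExpansion quasiGreedyDigit
  split_ifs <;> simp

theorem quasiGreedyExpansion_zero_of_one_lt (hx : 1 < β * x) : quasiGreedyExpansion β x 0 = 1 :=
  if_pos hx

theorem mapsTo_quasiGreedyMap (hβ : 1 < β) (hβ₂ : β ≤ 2) :
    Set.MapsTo (quasiGreedyMap β) (Set.Ioc 0 (1 / (β - 1))) (Set.Ioc 0 (1 / (β - 1))) := by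
  rintro x ⟨x_pos, x_le⟩
  have hβ₁ : 0 < β - 1 := sub_pos.mpr hβ
  unfold quasiGreedyMap quasiGreedyDigit
  split_ifs with h
  · rw [le_div_iff₀ hβ₁] at x_le
    refine ⟨by simpa using h, (le_div_iff₀ hβ₁).mpr ?_⟩
    push_cast
    nlinarith
  · have one_le : 1 ≤ 1 / (β - 1) := (one_le_div hβ₁).mpr (by linarith)
    rw [Nat.cast_zero, sub_zero]
    exact ⟨by positivity, (not_lt.mp h).trans one_le⟩

theorem iterate_quasiGreedyMap_mem (hβ : 1 < β) (hβ₂ : β ≤ 2) (hx : x ∈ Set.Ioc 0 (1 / (β - 1)))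
    (n : ℕ) : (quasiGreedyMap β)^[n] x ∈ Set.Ioc 0 (1 / (β - 1)) :=
  (mapsTo_quasiGreedyMap hβ hβ₂).iterate n hx

theorem tailVal_quasiGreedyExpansion (hβ : 1 < β) (hβ₂ : β ≤ 2)
    (hx : x ∈ Set.Ioc 0 (1 / (β - 1))) :
    tailVal β (quasiGreedyExpansion β x) = fun n => (quasiGreedyMap β)^[n] x :=
  tailVal_eq_of_bounded_orbit hβ quasiGreedyExpansion_le_one
    (fun n => Function.iterate_succ_apply' (quasiGreedyMap β) n x)
    fun n => Set.Ioc_subset_Icc_self (iterate_quasiGreedyMap_mem hβ hβ₂ hx n)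

theorem betaVal_quasiGreedyExpansion (hβ : 1 < β) (hβ₂ : β ≤ 2)
    (hx : x ∈ Set.Ioc 0 (1 / (β - 1))) : betaVal β (quasiGreedyExpansion β x) = x := by
  rw [← tailVal_zero, tailVal_quasiGreedyExpansion hβ hβ₂ hx]
  rfl

theorem exists_quasiGreedyExpansion_eq_one (hβ : 1 < β) (hβ₂ : β ≤ 2)
    (hx : x ∈ Set.Ioc 0 (1 / (β - 1))) (N : ℕ) : ∃ n ≥ N, quasiGreedyExpansion β x n = 1 := by
  have tail_pos : 0 < tailVal β (quasiGreedyExpansion β x) N := by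
    rw [tailVal_quasiGreedyExpansion hβ hβ₂ hx]
    exact (iterate_quasiGreedyMap_mem hβ hβ₂ hx N).1
  obtain ⟨n, hn, digit_ne⟩ := (tailVal_pos_iff hβ quasiGreedyExpansion_le_one N).mp tail_pos
  exact ⟨n, hn, (quasiGreedyExpansion_le_one n).antisymm (Nat.one_le_iff_ne_zero.mpr digit_ne)⟩

end QuasiGreedyAlgorithm

namespace QuasiGreedy

variable {β : ℝ} {η : ℕ → ℕ}

theorem digit_le_one (hη : QuasiGreedy β η) (n : ℕ) : η n ≤ 1 := hη.1 n

theorem exists_digit_eq_one (hη : QuasiGreedy β η) (N : ℕ) : ∃ n ≥ N, η n = 1 := hη.2.1 N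

theorem betaVal_eq_one (hη : QuasiGreedy β η) : betaVal β η = 1 := hη.2.2.1

theorem digit_eq_zero_or_one (hη : QuasiGreedy β η) (n : ℕ) : η n = 0 ∨ η n = 1 :=
  Nat.le_one_iff_eq_zero_or_eq_one.mp (hη.digit_le_one n)

theorem base_le_two (hβ : 1 < β) (hη : QuasiGreedy β η) : β ≤ 2 := by
  have one_le : 1 ≤ 1 / (β - 1) := by
    simpa [hη.betaVal_eq_one] using betaVal_le hβ hη.digit_le_one
  linarith [(one_le_div (sub_pos.mpr hβ)).mp one_le]

theorem tailVal_pos (hβ : 1 < β) (hη : QuasiGreedy β η) (n : ℕ) : 0 < tailVal β η n := by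
  obtain ⟨m, hm, digit_one⟩ := hη.exists_digit_eq_one n
  exact (tailVal_pos_iff hβ hη.digit_le_one n).mpr ⟨m, hm, by simp [digit_one]⟩

theorem one_lt_mul_tailVal_of_digit_eq_one (hβ : 1 < β) (hη : QuasiGreedy β η) {n : ℕ}
    (hn : η n = 1) : 1 < β * tailVal β η n := by
  simpa [tailVal_succ hβ hη.digit_le_one, hn] using hη.tailVal_pos hβ (n + 1)

theorem not_lexLt_of_betaVal_eq_one (hη : QuasiGreedy β η) {ζ : ℕ → ℕ} (hζ : ∀ n, ζ n ≤ 1)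
    (infinite : ∀ N, ∃ n ≥ N, ζ n = 1) (value : betaVal β ζ = 1) : ¬ LexLt η ζ := by
  rintro ⟨n, agree, lt⟩
  have ne : ζ ≠ η := fun h => lt.ne (congrFun h n).symm
  obtain ⟨m, agree', lt'⟩ := hη.2.2.2 ζ hζ infinite value ne
  rcases lt_trichotomy m n with h | rfl | h
  · exact lt'.ne (agree m h).symm
  · exact lt.asymm lt'
  · exact lt.ne (agree' n h).symm

theorem mul_tailVal_le_one_of_digit_eq_zero (hβ : 1 < β) (hη : QuasiGreedy β η) {n : ℕ}
    (hn : η n = 0) : β * tailVal β η n ≤ 1 := by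
  by_contra! one_lt
  have hβ₂ := hη.base_le_two hβ
  have tail_mem : tailVal β η n ∈ Set.Ioc 0 (1 / (β - 1)) :=
    ⟨hη.tailVal_pos hβ n, by simpa using tailVal_le hβ hη.digit_le_one n⟩
  let d := quasiGreedyExpansion β (tailVal β η n)
  have d_zero : d 0 = 1 := quasiGreedyExpansion_zero_of_one_lt one_lt
  refine hη.not_lexLt_of_betaVal_eq_one (ζ := splice η d n)
    (splice_le hη.digit_le_one quasiGreedyExpansion_le_one n) (fun N => ?_) ?_
    ⟨n, fun k hk => (splice_of_lt η d hk).symm, ?_⟩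
  · obtain ⟨m, hm, digit_one⟩ := exists_quasiGreedyExpansion_eq_one hβ hβ₂ tail_mem N
    exact ⟨n + m, le_add_left hm, (splice_add η d n m).trans digit_one⟩
  · rw [betaVal_splice hβ hη.digit_le_one quasiGreedyExpansion_le_one
      (betaVal_quasiGreedyExpansion hβ hβ₂ tail_mem), hη.betaVal_eq_one]
  · have splice_n : splice η d n n = 1 := (splice_add η d n 0).trans d_zero
    rw [hn, splice_n]
    exact zero_lt_one

theorem tailVal_le_one (hβ : 1 < β) (hη : QuasiGreedy β η) (n : ℕ) : tailVal β η n ≤ 1 := by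
  induction n with
  | zero => rw [tailVal_zero, hη.betaVal_eq_one]
  | succ n ih =>
    rw [tailVal_succ hβ hη.digit_le_one]
    rcases hη.digit_eq_zero_or_one n with h | h
    · simpa [h] using hη.mul_tailVal_le_one_of_digit_eq_zero hβ h
    · rw [h]
      push_cast
      nlinarith [hη.base_le_two hβ]

theorem digit_zero (hβ : 1 < β) (hη : QuasiGreedy β η) : η 0 = 1 := by
  refine (hη.digit_eq_zero_or_one 0).resolve_left fun h => hβ.not_ge ?_
  simpa [tailVal_zero, hη.betaVal_eq_one] using hη.mul_tailVal_le_one_of_digit_eq_zero hβ h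

theorem tailVal_one (hβ : 1 < β) (hη : QuasiGreedy β η) : tailVal β η 1 = β - 1 := by
  simpa [tailVal_zero, hη.betaVal_eq_one, hη.digit_zero hβ] using tailVal_succ hβ hη.digit_le_one 0

theorem tailVal_lt_of_lexLt_reflect (hβ : 1 < β) (hβ₂ : β < 2) (hη : QuasiGreedy β η) {k : ℕ}
    (hlex : LexLt η fun n => 1 - η (k + n)) : tailVal β η k < 1 / (β - 1) - 1 := by
  obtain ⟨n, agree, lt : η n < 1 - η (k + n)⟩ := hlex
  have hβ₀ : 0 < β := zero_lt_one.trans hβ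
  have shift_le (i : ℕ) : η (k + i) ≤ 1 := hη.digit_le_one (k + i)
  have reflect_tail (i : ℕ) : tailVal β (fun j => 1 - η (k + j)) i =
      1 / (β - 1) - tailVal β η (k + i) := by
    rw [tailVal_reflect hβ shift_le]
    simp only [tailVal, add_assoc]
  have low : tailVal β η n ≤ 1 / β := by
    rw [le_div_iff₀' hβ₀]
    exact hη.mul_tailVal_le_one_of_digit_eq_zero hβ (by omega)
  have shift_low : tailVal β η (k + n) ≤ 1 / β := by
    rw [le_div_iff₀' hβ₀]
    exact hη.mul_tailVal_le_one_of_digit_eq_zero hβ (by omega)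
  have two_div_lt : 1 / β + 1 / β < 1 / (β - 1) := by
    rw [← add_div, div_lt_div_iff₀ hβ₀ (sub_pos.mpr hβ)]
    linarith
  have difference := tailVal_sub_tailVal_of_agree hβ hη.digit_le_one
    (fun i => Nat.sub_le 1 (η (k + i))) agree
  have values_lt : betaVal β η - betaVal β (fun j => 1 - η (k + j)) < 0 := by
    refine neg_of_mul_neg_right ?_ (pow_pos hβ₀ n).le
    rw [← difference, reflect_tail]
    linarith
  rw [hη.betaVal_eq_one, ← tailVal_zero, reflect_tail, add_zero] at values_lt
  linarith

theorem exists_tailVal_mem_switch_of_tailVal_lt (hβ : 1 < β) (hη : QuasiGreedy β η) {k : ℕ}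
    (hk : 1 ≤ k) (low : tailVal β η k < 1 / (β - 1) - 1) :
    ∃ n ≥ 1, tailVal β η n ∈ Set.Ioo (1 / β) (1 / (β * (β - 1))) := by
  have hβ₀ : 0 < β := zero_lt_one.trans hβ
  have hβ₁ : 0 < β - 1 := sub_pos.mpr hβ
  have above {n : ℕ} (hn : η n = 1) : 1 / β < tailVal β η n :=
    (div_lt_iff₀' hβ₀).mpr (hη.one_lt_mul_tailVal_of_digit_eq_one hβ hn)
  induction k, hk using Nat.le_induction with
  | base =>
    obtain ⟨n, hn, digit_one⟩ := hη.exists_digit_eq_one 1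
    have product_lt_one : β * (β - 1) < 1 := by
      rw [hη.tailVal_one hβ, lt_sub_iff_add_lt, lt_div_iff₀ hβ₁, sub_add_cancel] at low
      exact low
    exact ⟨n, hn, above digit_one, (hη.tailVal_le_one hβ n).trans_lt
      ((one_lt_div (mul_pos hβ₀ hβ₁)).mpr product_lt_one)⟩
  | succ k hk ih =>
    rw [tailVal_succ hβ hη.digit_le_one] at low
    rcases hη.digit_eq_zero_or_one k with h | h
    · rw [h, Nat.cast_zero, sub_zero] at low
      exact ih ((le_mul_of_one_le_left (hη.tailVal_pos hβ k).le hβ.le).trans_lt low)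
    · rw [h, Nat.cast_one, sub_lt_sub_iff_right, ← lt_div_iff₀' hβ₀, div_div, mul_comm] at low
      exact ⟨k, hk, above h, low⟩

end QuasiGreedy

/-- if for some `k₀ ≥ 1` the reflected shifted sequence
`(1 - η_{k₀+1}, 1 - η_{k₀+2}, …)` is lexicographically greater than `(η_1, η_2, …)`,
then the quasi-greedy orbit of `1` hits the interior `(1/β, 1/(β(β-1)))` of the
switch region. -/
theorem statement17 (β : ℝ) (hβ : β ∈ Set.Ioo (1 : ℝ) 2)
    (η : ℕ → ℕ) (hη : QuasiGreedy β η)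
    (Q : ℕ → ℝ) (hQ : ∀ n, Q n = betaVal β (fun k => η (n + k)))
    (hlex : ∃ k₀ ≥ 1, LexLt η (fun n => 1 - η (n + k₀))) :
    ∃ n ≥ 1, Q n ∈ Set.Ioo (1 / β) (1 / (β * (β - 1))) := by
  obtain ⟨hβ₁, hβ₂⟩ := hβ
  obtain ⟨k, hk, hlex⟩ := hlex
  simp only [add_comm _ k] at hlex
  simpa only [hQ, tailVal] using
    hη.exists_tailVal_mem_switch_of_tailVal_lt hβ₁ hk (hη.tailVal_lt_of_lexLt_reflect hβ₁ hβ₂ hlex)
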